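/- Let A ∈ ℝ^{n×n}, B ∈ ℝ^{n×m}, C ∈ ℝ^{q×n}, F ∈ ℝ^{n×q}, let N ∈ ℕ, let a_{ij} ≥ 0 (i,j = 1,…,N) with a_{ii} = 0, let ι_i ∈ {0,1}, set d_in(i) = Σ_j a_{ij}, let L be the Laplacian matrix of the weights (a_{ij}), L̄ = L + diag(ι_1,…,ι_N) with entries ℓ̄_{ij}, D_in = diag(d_in(1),…,d_in(N)), and D̄ = I − (2I + D_in)^{−1} L̄. Let κ_1, …, κ_N ∈ {0,…,κ̄} be delays, let x_r satisfy x_r(k+1) = A x_r(k), y_r = C x_r, and suppose x_i, x̂_i, χ_i, u_i (i = 1,…,N) satisfy, for all k ≥ 0, x_i(k+1) = A x_i(k) + B u_i(k − κ_i), y_i(k) = C x_i(k), x̂_i(k+1) = A x̂_i(k) + B ζ̂_{i2}(k) + F( ζ̄_i(k) − C x̂_i(k) ), and χ_i(k+1) = A χ_i(k) + B u_i(k − κ_i) + A x̂_i(k) − A ζ̂_{i1}(k), where ζ̄_i(k) = (2 + d_in(i))^{−1} [ Σ_{j=1}^N a_{ij}(y_i(k) − y_j(k)) + ι_i (y_i(k)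 − y_r(k)) ], ζ̂_{i1}(k) = (2 + d_in(i))^{−1} Σ_{j=1}^N ℓ̄_{ij} χ_j(k), and ζ̂_{i2}(k) = (2 + d_in(i))^{−1} Σ_{j=1}^N ℓ̄_{ij} u_j(k − κ_j). Let x̃ denote the stacked vector with blocks x̃_i = x_i − x_r, x̂ the stacked vector with blocks x̂_i, χ the stacked vector with blocks χ_i, and define ē(k) = ((I − D̄) ⊗ I_n) x̃(k) − x̂(k) and e(k) = x̃(k) − χ(k). Then for all k ≥ 0: ē(k+1) = (I_N ⊗ (A − FC)) ē(k) and e(k+1) = (D̄ ⊗ A) e(k) + (I_N ⊗ A) ē(k). -/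

import Mathlib

open Matrix Filter Topology Kronecker
open scoped Classical

noncomputable section

/-- A complex square matrix is Schur stable if all its eigenvalues lie in the open unit disc. -/
def SchurStableC {ι : Type*} [Fintype ι] [DecidableEq ι] (M : Matrix ι ι ℂ) : Prop :=
  ∀ μ ∈ spectrum ℂ M, ‖μ‖ < 1

/-- A real square matrix is Schur stable if all its (complex) eigenvalues lie in the open
unit disc. -/
def SchurStable {ι : Type*} [Fintype ι] [DecidableEq ι] (M : Matrix ι ι ℝ) : Prop :=
  SchurStableC (M.map Complex.ofReal)

/-- All eigenvalues of a real square matrix lie in the closed unit disc. -/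
def EigInClosedUnitDisc {ι : Type*} [Fintype ι] [DecidableEq ι] (M : Matrix ι ι ℝ) : Prop :=
  ∀ μ ∈ spectrum ℂ (M.map Complex.ofReal), ‖μ‖ ≤ 1

/-- The pair (A,B) is stabilizable. -/
def Stabilizable {n m : ℕ} (A : Matrix (Fin n) (Fin n) ℝ) (B : Matrix (Fin n) (Fin m) ℝ) : Prop :=
  ∃ K : Matrix (Fin m) (Fin n) ℝ, SchurStable (A - B * K)

/-- The pair (C,A) is detectable. -/
def Detectable {n q : ℕ} (C : Matrix (Fin q) (Fin n) ℝ) (A : Matrix (Fin n) (Fin n) ℝ) : Prop :=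
  ∃ F : Matrix (Fin n) (Fin q) ℝ, SchurStable (A - F * C)

/-- `P` is a positive definite solution of the discrete algebraic Riccati equation
`AᵀPA − P − AᵀPB(I + BᵀPB)⁻¹BᵀPA + εI = 0`. -/
def IsDARESol {n m : ℕ} (A : Matrix (Fin n) (Fin n) ℝ) (B : Matrix (Fin n) (Fin m) ℝ)
    (ε : ℝ) (P : Matrix (Fin n) (Fin n) ℝ) : Prop :=
  P.PosDef ∧
    Aᵀ * P * A - P - Aᵀ * P * B * (1 + Bᵀ * P * B)⁻¹ * (Bᵀ * P * A)
      + ε • (1 : Matrix (Fin n) (Fin n) ℝ) = 0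

/-- The low-gain feedback `K = (I + BᵀPB)⁻¹BᵀPA`. -/
def gainK {n m : ℕ} (A : Matrix (Fin n) (Fin n) ℝ) (B : Matrix (Fin n) (Fin m) ℝ)
    (P : Matrix (Fin n) (Fin n) ℝ) : Matrix (Fin m) (Fin n) ℝ :=
  (1 + Bᵀ * P * B)⁻¹ * (Bᵀ * P * A)

/-- `ω_max`: zero if `A` is Schur stable, otherwise the largest `ω ∈ [0,π]` with
`det(e^{iω}I − A) = 0`. -/
def omegaMax {n : ℕ} (A : Matrix (Fin n) (Fin n) ℝ) : ℝ :=
  if SchurStable A then 0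
  else sSup {ω : ℝ | ω ∈ Set.Icc 0 Real.pi ∧
    (Complex.exp (ω * Complex.I) • (1 : Matrix (Fin n) (Fin n) ℂ)
      - A.map Complex.ofReal).det = 0}

/-- In-degree `d_in(i) = Σ_j a_{ij}`. -/
def dIn {N : ℕ} (a : Fin N → Fin N → ℝ) (i : Fin N) : ℝ := ∑ j, a i j

/-- The Laplacian matrix of the weights `a`. -/
def lapL {N : ℕ} (a : Fin N → Fin N → ℝ) : Matrix (Fin N) (Fin N) ℝ :=
  Matrix.of fun i j => if i = j then dIn a i else -a i j

/-- The expanded Laplacian `L̄ = L + diag(ι)`. -/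
def lapLbar {N : ℕ} (a : Fin N → Fin N → ℝ) (ι : Fin N → ℝ) : Matrix (Fin N) (Fin N) ℝ :=
  lapL a + Matrix.diagonal ι

/-- `D̄ = I − (2I + D_in)⁻¹ L̄`. -/
def DbarM {N : ℕ} (a : Fin N → Fin N → ℝ) (ι : Fin N → ℝ) : Matrix (Fin N) (Fin N) ℝ :=
  1 - ((2 : ℝ) • (1 : Matrix (Fin N) (Fin N) ℝ) + Matrix.diagonal (dIn a))⁻¹ * lapLbar a ι

theorem aux_kron {N n : ℕ} (M : Matrix (Fin N) (Fin N) ℝ) (A : Matrix (Fin n) (Fin n) ℝ)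
    (v : Fin N → Fin n → ℝ) (p : Fin N × Fin n) :
    (M ⊗ₖ A).mulVec (fun p => v p.1 p.2) p = (∑ j, M p.1 j • A.mulVec (v j)) p.2 := by
  simp only [Matrix.mulVec, dotProduct, Matrix.kroneckerMap_apply, Fintype.sum_prod_type,
    Finset.sum_apply, Pi.smul_apply, smul_eq_mul, Finset.mul_sum, mul_assoc]

theorem aux_W {N : ℕ} (a : Fin N → Fin N → ℝ) (ι : Fin N → ℝ) (ha : ∀ i j, 0 ≤ a i j)
    (i j : Fin N) :
    ((1 : Matrix (Fin N) (Fin N) ℝ) - DbarM a ι) i j = (2 + dIn a i)⁻¹ * lapLbar a ι i j := by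
  have h0 : ∀ i, (2 + dIn a i) ≠ 0 := fun i => by
    have : 0 ≤ dIn a i := Finset.sum_nonneg fun j _ => ha i j
    positivity
  have h1 : ((2 : ℝ) • (1 : Matrix (Fin N) (Fin N) ℝ) + Matrix.diagonal (dIn a))⁻¹
      = Matrix.diagonal (fun i => (2 + dIn a i)⁻¹) := by
    apply Matrix.inv_eq_right_inv
    rw [Matrix.smul_one_eq_diagonal, Matrix.diagonal_add, Matrix.diagonal_mul_diagonal]
    rw [← Matrix.diagonal_one]
    congr 1
    funext i
    exact mul_inv_cancel₀ (h0 i)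
  rw [DbarM, h1, sub_sub_cancel, Matrix.diagonal_mul]

theorem aux_lap {N q : ℕ} (a : Fin N → Fin N → ℝ) (ι : Fin N → ℝ) (hdiag : ∀ i, a i i = 0)
    (i : Fin N) (y : Fin N → Fin q → ℝ) (r : Fin q → ℝ) :
    ∑ j, a i j • (y i - y j) + ι i • (y i - r) = ∑ j, lapLbar a ι i j • (y j - r) := by
  have h : ∀ j, lapLbar a ι i j = (if i = j then dIn a i + ι i else 0) - a i j := by
    intro j
    by_cases hij : i = j
    · subst hij; simp [lapLbar, lapL, hdiag]
    · simp [lapLbar, lapL, hij]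
  simp only [h, sub_smul, Finset.sum_sub_distrib, ite_smul, zero_smul, Finset.sum_ite_eq,
    Finset.mem_univ, if_true, smul_sub, ← Finset.sum_smul, add_smul]
  simp only [dIn]
  abel

/-- for the partial-state-coupling protocol, with
`ē = ((I − D̄) ⊗ I) x̃ − x̂` and `e = x̃ − χ` (where `x̃_i = x_i − x_r`), one has
`ē(k+1) = (I ⊗ (A − FC)) ē(k)` and `e(k+1) = (D̄ ⊗ A) e(k) + (I ⊗ A) ē(k)`.
Time is shifted by `κbar`, so actual time `k` corresponds to index `k + κbar`
for the agent signals. -/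
theorem partialstate_error_dynamics {n m q N : ℕ}
    (A : Matrix (Fin n) (Fin n) ℝ) (B : Matrix (Fin n) (Fin m) ℝ)
    (C : Matrix (Fin q) (Fin n) ℝ) (F : Matrix (Fin n) (Fin q) ℝ)
    (a : Fin N → Fin N → ℝ) (ι : Fin N → ℝ)
    (ha : ∀ i j, 0 ≤ a i j) (hdiag : ∀ i, a i i = 0) (hι : ∀ i, ι i = 0 ∨ ι i = 1)
    (κbar : ℕ) (κ : Fin N → ℕ) (hκ : ∀ i, κ i ≤ κbar)
    (xr : ℕ → Fin n → ℝ) (hxr : ∀ k : ℕ, xr (k + 1) = A.mulVec (xr k))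
    (yr : ℕ → Fin q → ℝ) (hyr : ∀ k : ℕ, yr k = C.mulVec (xr k))
    (x xhat χ : Fin N → ℕ → Fin n → ℝ) (y : Fin N → ℕ → Fin q → ℝ)
    (u : Fin N → ℕ → Fin m → ℝ)
    (hy : ∀ i k, y i k = C.mulVec (x i k))
    (hx : ∀ i k, x i (k + κbar + 1)
        = A.mulVec (x i (k + κbar)) + B.mulVec (u i (k + κbar - κ i)))
    (hxhat : ∀ i k, xhat i (k + κbar + 1)
        = A.mulVec (xhat i (k + κbar))
          + B.mulVec ((2 + dIn a i)⁻¹ • ∑ j, lapLbar a ι i j • u j (k + κbar - κ j))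
          + F.mulVec ((2 + dIn a i)⁻¹ •
              (∑ j, a i j • (y i (k + κbar) - y j (k + κbar))
                + ι i • (y i (k + κbar) - yr k))
            - C.mulVec (xhat i (k + κbar))))
    (hχ : ∀ i k, χ i (k + κbar + 1)
        = A.mulVec (χ i (k + κbar)) + B.mulVec (u i (k + κbar - κ i))
          + A.mulVec (xhat i (k + κbar))
          - A.mulVec ((2 + dIn a i)⁻¹ • ∑ j, lapLbar a ι i j • χ j (k + κbar))) :
    (∀ k : ℕ,
      (fun p : Fin N × Fin n =>
          (∑ j, ((1 : Matrix (Fin N) (Fin N) ℝ) - DbarM a ι) p.1 j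
              * (x j (k + 1 + κbar) p.2 - xr (k + 1) p.2))
            - xhat p.1 (k + 1 + κbar) p.2)
      = ((1 : Matrix (Fin N) (Fin N) ℝ) ⊗ₖ (A - F * C)).mulVec
          (fun p : Fin N × Fin n =>
            (∑ j, ((1 : Matrix (Fin N) (Fin N) ℝ) - DbarM a ι) p.1 j
                * (x j (k + κbar) p.2 - xr k p.2))
              - xhat p.1 (k + κbar) p.2)) ∧
    (∀ k : ℕ,
      (fun p : Fin N × Fin n =>
          (x p.1 (k + 1 + κbar) p.2 - xr (k + 1) p.2) - χ p.1 (k + 1 + κbar) p.2)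
      = (DbarM a ι ⊗ₖ A).mulVec
          (fun p : Fin N × Fin n =>
            (x p.1 (k + κbar) p.2 - xr k p.2) - χ p.1 (k + κbar) p.2)
        + ((1 : Matrix (Fin N) (Fin N) ℝ) ⊗ₖ A).mulVec
          (fun p : Fin N × Fin n =>
            (∑ j, ((1 : Matrix (Fin N) (Fin N) ℝ) - DbarM a ι) p.1 j
                * (x j (k + κbar) p.2 - xr k p.2))
              - xhat p.1 (k + κbar) p.2)) := by
  have hW := aux_W a ι ha
  have hk : ∀ k, k + 1 + κbar = k + κbar + 1 := fun k => by omega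
  have hE : ∀ k (p : Fin N × Fin n),
      (∑ j, ((1 : Matrix (Fin N) (Fin N) ℝ) - DbarM a ι) p.1 j
              * (x j (k + κbar) p.2 - xr k p.2)) - xhat p.1 (k + κbar) p.2
      = (fun i => ((2 + dIn a i)⁻¹ • ∑ j, lapLbar a ι i j • (x j (k + κbar) - xr k))
          - xhat i (k + κbar)) p.1 p.2 := by
    intro k p
    simp only [hW, Pi.sub_apply, Pi.smul_apply, Finset.sum_apply, smul_eq_mul, Finset.mul_sum,
      mul_assoc]
  have hD : ∀ (i : Fin N) (v : Fin N → Fin n → ℝ),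
      ∑ j, DbarM a ι i j • v j = v i - (2 + dIn a i)⁻¹ • ∑ j, lapLbar a ι i j • v j := by
    intro i v
    have h : ∀ j, DbarM a ι i j
        = (1 : Matrix (Fin N) (Fin N) ℝ) i j - (2 + dIn a i)⁻¹ * lapLbar a ι i j := by
      intro j
      rw [← hW, Matrix.sub_apply, sub_sub_cancel]
    simp only [h, sub_smul, Finset.sum_sub_distrib, Matrix.one_apply, ite_smul, one_smul,
      zero_smul, Finset.sum_ite_eq, Finset.mem_univ, if_true, mul_smul, Finset.smul_sum]
  have h1 : ∀ (i : Fin N) (v : Fin N → Fin n → ℝ),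
      ∑ j, (1 : Matrix (Fin N) (Fin N) ℝ) i j • v j = v i := by
    intro i v
    simp [Matrix.one_apply]
  constructor
  · intro k
    funext p
    simp only [hE]
    refine Eq.trans ?_ (aux_kron 1 (A - F * C) (fun i => ((2 + dIn a i)⁻¹ •
      ∑ j, lapLbar a ι i j • (x j (k + κbar) - xr k)) - xhat i (k + κbar)) p).symm
    rw [h1]
    refine congrFun ?_ p.2
    simp only [hk, hx, hxhat, hxr, hy, hyr, aux_lap a ι hdiag p.1 (fun j => C.mulVec (x j (k + κbar)))]
    simp only [Matrix.mulVec_add, Matrix.mulVec_sub, Matrix.mulVec_smul, Matrix.mulVec_sum,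
      Matrix.sub_mulVec, ← Matrix.mulVec_mulVec, smul_add, smul_sub, Finset.sum_add_distrib,
      Finset.sum_sub_distrib]
    abel
  · intro k
    funext p
    simp only [hE]
    refine Eq.trans ?_ (congrArg₂ (· + ·)
      (aux_kron (DbarM a ι) A (fun i => (x i (k + κbar) - xr k) - χ i (k + κbar)) p)
      (aux_kron 1 A (fun i => ((2 + dIn a i)⁻¹ •
        ∑ j, lapLbar a ι i j • (x j (k + κbar) - xr k)) - xhat i (k + κbar)) p)).symm
    rw [h1, hD]
    change _ = (_ + _ : Fin n → ℝ) p.2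
    change (x p.1 (k + 1 + κbar) - xr (k + 1) - χ p.1 (k + 1 + κbar)) p.2 = _
    refine congrFun ?_ p.2
    simp only [hk, hx, hχ, hxr]
    simp only [Matrix.mulVec_add, Matrix.mulVec_sub, Matrix.mulVec_smul, Matrix.mulVec_sum,
      smul_add, smul_sub, Finset.sum_add_distrib, Finset.sum_sub_distrib]
    abel
end
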